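/- Let n ≥ 2, let Ω ⊂ ℝⁿ be an open bounded set contained in the closed ball of radius R centered at the origin, let Ω₁ ⊂ ℝⁿ be an open bounded set with closure(Ω) ⊂ Ω₁, and let f₁, f₂ : ℝⁿ → ℝ be continuous, supported in the closure of Ω, with |f_j(x)| ≤ M for all x and j = 1,2. Then ‖Kf₁ − Kf₂‖_{L²(Ω₁)} ≤ e^{2RM} ‖X'X|f₁ − f₂|‖_{L²(Ω₁)}. -/

import Mathlib

open MeasureTheory Metric Real

/-- The `n`-dimensional Euclidean space. -/
abbrev Euc (n : ℕ) := EuclideanSpace ℝ (Fin n)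

/-- The standard surface measure on the unit sphere `S^{n-1} ⊂ ℝⁿ`. -/
noncomputable def sphereMeasure (n : ℕ) : Measure (sphere (0 : Euc n) 1) :=
  (volume : Measure (Euc n)).toSphere

/-- The surface measure `|S^{n-1}|` of the unit sphere in `ℝⁿ`. -/
noncomputable def sphereVol (n : ℕ) : ℝ := (sphereMeasure n Set.univ).toReal

/-- The X-ray transform `Xf(x,θ) = ∫_ℝ f(x+sθ) ds`. -/
noncomputable def Xray {n : ℕ} (f : Euc n → ℝ) (x θ : Euc n) : ℝ :=
  ∫ s : ℝ, f (x + s • θ)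

/-- The normal operator `X'Xf(x) = ∫_{S^{n-1}} Xf(x,θ) dθ`. -/
noncomputable def normalOp {n : ℕ} (f : Euc n → ℝ) (x : Euc n) : ℝ :=
  ∫ θ : sphere (0 : Euc n) 1, Xray f x (θ : Euc n) ∂(sphereMeasure n)

/-- The single pixel X-ray transform `Kf(x) = ∫_{S^{n-1}} e^{-Xf(x,θ)} dθ`. -/
noncomputable def singlePixel {n : ℕ} (f : Euc n → ℝ) (x : Euc n) : ℝ :=
  ∫ θ : sphere (0 : Euc n) 1, Real.exp (-(Xray f x (θ : Euc n))) ∂(sphereMeasure n)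

/-- The Fourier transform `𝓕f(ξ) = ∫ e^{-i x·ξ} f(x) dx`. -/
noncomputable def FT {n : ℕ} (f : Euc n → ℝ) (ξ : Euc n) : ℂ :=
  ∫ x : Euc n, Complex.exp (-(Complex.I * ((inner ℝ x ξ : ℝ) : ℂ))) * (f x : ℂ)

/-- The inverse Fourier transform `𝓕⁻¹g(x) = (2π)^{-n} ∫ e^{i x·ξ} g(ξ) dξ`. -/
noncomputable def invFT {n : ℕ} (g : Euc n → ℂ) (x : Euc n) : ℂ :=
  ((((2 * π) ^ n)⁻¹ : ℝ) : ℂ) * ∫ ξ : Euc n, Complex.exp (Complex.I * ((inner ℝ x ξ : ℝ) : ℂ)) * g ξ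

/-- The `L²(ℝⁿ)` norm `(∫ |f|²)^{1/2}`. -/
noncomputable def L2norm {n : ℕ} (f : Euc n → ℝ) : ℝ :=
  (∫ x : Euc n, f x ^ 2) ^ ((1 : ℝ) / 2)

/-- The `H¹(U)` norm `(∫_U |u|²)^{1/2} + (∫_U |∇u|²)^{1/2}`. -/
noncomputable def H1norm {n : ℕ} (U : Set (Euc n)) (u : Euc n → ℝ) : ℝ :=
  (∫ x in U, u x ^ 2) ^ ((1 : ℝ) / 2) + (∫ x in U, ‖fderiv ℝ u x‖ ^ 2) ^ ((1 : ℝ) / 2)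

/-- Reparametrizing a line by its signed distance from the point closest to the origin turns the
X-ray transform into an integral over a fixed interval. -/
lemma Xray_eq_intervalIntegral {n : ℕ} {R : ℝ} (hR : 0 ≤ R) {f : Euc n → ℝ}
    (hf : Function.support f ⊆ closedBall 0 R) (x : Euc n) {θ : Euc n} (hθ : ‖θ‖ = 1) :
    Xray f x θ = ∫ s in (-R)..R, f (x + (s - inner ℝ x θ) • θ) := by
  rw [Xray, ← integral_sub_right_eq_self (fun s : ℝ => f (x + s • θ)) (inner ℝ x θ),
    intervalIntegral.integral_of_le (by linarith), ← integral_Icc_eq_integral_Ioc]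
  refine (setIntegral_eq_integral_of_forall_compl_eq_zero fun s hs => ?_).symm
  by_contra h
  have h_norm : ‖x + (s - inner ℝ x θ) • θ‖ ≤ R := by simpa using hf h
  have h_inner : inner ℝ (x + (s - inner ℝ x θ) • θ) θ = s := by
    rw [inner_add_left, real_inner_smul_left, real_inner_self_eq_norm_sq, hθ]
    ring
  have h_le := abs_real_inner_le_norm (x + (s - inner ℝ x θ) • θ) θ
  rw [h_inner, hθ, mul_one] at h_le
  exact hs (abs_le.mp (h_le.trans h_norm))

lemma continuous_Xray {n : ℕ} {R : ℝ} (hR : 0 ≤ R) {f : Euc n → ℝ} (hc : Continuous f)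
    (hf : Function.support f ⊆ closedBall 0 R) :
    Continuous fun p : Euc n × sphere (0 : Euc n) 1 => Xray f p.1 (p.2 : Euc n) := by
  have h_eq : (fun p : Euc n × sphere (0 : Euc n) 1 => Xray f p.1 (p.2 : Euc n)) = fun p =>
      ∫ s in (-R)..R, f (p.1 + (s - inner ℝ p.1 (p.2 : Euc n)) • (p.2 : Euc n)) := by
    funext p
    exact Xray_eq_intervalIntegral hR hf p.1 (norm_eq_of_mem_sphere p.2)
  rw [h_eq]
  apply intervalIntegral.continuous_parametric_intervalIntegral_of_continuous'
  fun_prop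

lemma abs_Xray_le {n : ℕ} {R M : ℝ} (hR : 0 ≤ R) {f : Euc n → ℝ}
    (hf : Function.support f ⊆ closedBall 0 R) (hM : ∀ x, |f x| ≤ M) (x : Euc n) {θ : Euc n}
    (hθ : ‖θ‖ = 1) : |Xray f x θ| ≤ 2 * R * M := by
  rw [Xray_eq_intervalIntegral hR hf x hθ, ← Real.norm_eq_abs]
  refine (intervalIntegral.norm_integral_le_of_norm_le_const fun s _ => hM _).trans_eq ?_
  rw [abs_of_nonneg (by linarith)]
  ring

lemma abs_Xray_sub_le {n : ℕ} {R : ℝ} (hR : 0 ≤ R) {f g : Euc n → ℝ} (hfc : Continuous f)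
    (hgc : Continuous g) (hf : Function.support f ⊆ closedBall 0 R)
    (hg : Function.support g ⊆ closedBall 0 R)
    (hfg : Function.support (fun y => |f y - g y|) ⊆ closedBall 0 R) (x : Euc n) {θ : Euc n}
    (hθ : ‖θ‖ = 1) : |Xray f x θ - Xray g x θ| ≤ Xray (fun y => |f y - g y|) x θ := by
  rw [Xray_eq_intervalIntegral hR hf x hθ, Xray_eq_intervalIntegral hR hg x hθ,
    Xray_eq_intervalIntegral hR hfg x hθ, ← intervalIntegral.integral_sub
      (Continuous.intervalIntegrable (by fun_prop) _ _)
      (Continuous.intervalIntegrable (by fun_prop) _ _)]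
  exact intervalIntegral.abs_integral_le_integral_abs (by linarith)

lemma abs_exp_neg_sub_exp_neg_le {a b C : ℝ} (ha : |a| ≤ C) (hb : |b| ≤ C) :
    |exp (-a) - exp (-b)| ≤ exp C * |a - b| := by
  have key : ∀ u v : ℝ, |u| ≤ C → exp (-u) - exp (-v) ≤ exp C * |u - v| := by
    intro u v hu
    have h_split : exp (-v) = exp (-u) * exp (u - v) := by
      rw [← exp_add]
      ring_nf
    calc exp (-u) - exp (-v) = exp (-u) * (1 - exp (u - v)) := by rw [h_split]; ring
      _ ≤ exp (-u) * |u - v| := by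
        gcongr
        linarith [add_one_le_exp (u - v), neg_abs_le (u - v)]
      _ ≤ exp C * |u - v| := by
        gcongr
        linarith [neg_abs_le u]
  refine abs_sub_le_iff.mpr ⟨key a b ha, ?_⟩
  rw [abs_sub_comm]
  exact key b a hb

instance isFiniteMeasure_sphereMeasure (n : ℕ) : IsFiniteMeasure (sphereMeasure n) := by
  unfold sphereMeasure
  infer_instance

lemma integrable_sphereMeasure {n : ℕ} {g : sphere (0 : Euc n) 1 → ℝ} (hg : Continuous g) :
    Integrable g (sphereMeasure n) :=
  hg.integrable_of_hasCompactSupport (HasCompactSupport.of_compactSpace g)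

lemma continuous_normalOp {n : ℕ} {R : ℝ} (hR : 0 ≤ R) {f : Euc n → ℝ} (hc : Continuous f)
    (hf : Function.support f ⊆ closedBall 0 R) : Continuous (normalOp f) := by
  have h := continuous_parametric_integral_of_continuous (μ := sphereMeasure n)
    (f := fun x (θ : sphere (0 : Euc n) 1) => Xray f x (θ : Euc n))
    (continuous_Xray hR hc hf) isCompact_univ
  rw [Measure.restrict_univ] at h
  exact h

/-- Pointwise comparison of the single pixel transforms with the normal operator. -/
lemma abs_singlePixel_sub_le {n : ℕ} {R M : ℝ} (hR : 0 ≤ R) {f g : Euc n → ℝ}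
    (hfc : Continuous f) (hgc : Continuous g) (hf : Function.support f ⊆ closedBall 0 R)
    (hg : Function.support g ⊆ closedBall 0 R)
    (hfg : Function.support (fun y => |f y - g y|) ⊆ closedBall 0 R)
    (hfM : ∀ x, |f x| ≤ M) (hgM : ∀ x, |g x| ≤ M) (x : Euc n) :
    |singlePixel f x - singlePixel g x| ≤
      exp (2 * R * M) * normalOp (fun y => |f y - g y|) x := by
  have hXf : Continuous fun θ : sphere (0 : Euc n) 1 => Xray f x (θ : Euc n) :=
    (continuous_Xray hR hfc hf).comp (Continuous.prodMk_right x)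
  have hXg : Continuous fun θ : sphere (0 : Euc n) 1 => Xray g x (θ : Euc n) :=
    (continuous_Xray hR hgc hg).comp (Continuous.prodMk_right x)
  have hXfg : Continuous fun θ : sphere (0 : Euc n) 1 =>
      Xray (fun y => |f y - g y|) x (θ : Euc n) :=
    (continuous_Xray hR (hfc.sub hgc).abs hfg).comp (Continuous.prodMk_right x)
  have hEf : Continuous fun θ : sphere (0 : Euc n) 1 => exp (-Xray f x (θ : Euc n)) := by
    fun_prop
  have hEg : Continuous fun θ : sphere (0 : Euc n) 1 => exp (-Xray g x (θ : Euc n)) := by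
    fun_prop
  rw [singlePixel, singlePixel, normalOp,
    ← integral_sub (integrable_sphereMeasure hEf) (integrable_sphereMeasure hEg),
    ← integral_const_mul]
  refine abs_integral_le_integral_abs.trans (integral_mono
    (integrable_sphereMeasure (hEf.sub hEg).abs)
    ((integrable_sphereMeasure hXfg).const_mul _) fun θ => ?_)
  have hθ : ‖(θ : Euc n)‖ = 1 := norm_eq_of_mem_sphere θ
  exact (abs_exp_neg_sub_exp_neg_le (abs_Xray_le hR hf hfM x hθ)
    (abs_Xray_le hR hg hgM x hθ)).trans
    (mul_le_mul_of_nonneg_left (abs_Xray_sub_le hR hfc hgc hf hg hfg x hθ) (exp_pos _).le)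

/-- For `n ≥ 2`, `Ω` open bounded contained in the closed ball of radius `R`,
`Ω₁` open bounded with `closure Ω ⊂ Ω₁`, and `f₁, f₂` continuous, supported in `closure Ω`,
bounded by `M`, one has `‖Kf₁ − Kf₂‖_{L²(Ω₁)} ≤ e^{2RM} ‖X'X|f₁ − f₂|‖_{L²(Ω₁)}`. -/
theorem singlePixel_difference_L2 (n : ℕ) (hn : 2 ≤ n) (R M : ℝ) (hR : 0 ≤ R)
    (Ω Ω₁ : Set (Euc n)) (hΩo : IsOpen Ω) (hΩb : Bornology.IsBounded Ω)
    (hΩR : Ω ⊆ Metric.closedBall 0 R)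
    (hΩ₁o : IsOpen Ω₁) (hΩ₁b : Bornology.IsBounded Ω₁) (hΩΩ₁ : closure Ω ⊆ Ω₁)
    (f₁ f₂ : Euc n → ℝ) (hf₁ : Continuous f₁) (hf₂ : Continuous f₂)
    (hs₁ : Function.support f₁ ⊆ closure Ω) (hs₂ : Function.support f₂ ⊆ closure Ω)
    (hM₁ : ∀ x, |f₁ x| ≤ M) (hM₂ : ∀ x, |f₂ x| ≤ M) :
    (∫ x in Ω₁, (singlePixel f₁ x - singlePixel f₂ x) ^ 2) ^ ((1 : ℝ) / 2) ≤
      Real.exp (2 * R * M) *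
        (∫ x in Ω₁, (normalOp (fun y => |f₁ y - f₂ y|) x) ^ 2) ^ ((1 : ℝ) / 2) := by
  have h_closure : closure Ω ⊆ closedBall 0 R := closure_minimal hΩR isClosed_closedBall
  have hf := hs₁.trans h_closure
  have hg := hs₂.trans h_closure
  have hfg : Function.support (fun y => |f₁ y - f₂ y|) ⊆ closedBall 0 R := by
    intro y hy
    by_contra h
    have h₁ : f₁ y = 0 := Function.notMem_support.mp fun h' => h (hf h')
    have h₂ : f₂ y = 0 := Function.notMem_support.mp fun h' => h (hg h')
    simp [h₁, h₂] at hy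
  have h_int : IntegrableOn
      (fun x => (exp (2 * R * M) * normalOp (fun y => |f₁ y - f₂ y|) x) ^ 2) Ω₁ := by
    have h_cont := continuous_normalOp hR (hf₁.sub hf₂).abs hfg
    exact ((continuous_const.mul h_cont).pow 2).continuousOn.integrableOn_compact
      hΩ₁b.isCompact_closure |>.mono_set subset_closure
  calc (∫ x in Ω₁, (singlePixel f₁ x - singlePixel f₂ x) ^ 2) ^ ((1 : ℝ) / 2)
      ≤ (∫ x in Ω₁, (exp (2 * R * M) * normalOp (fun y => |f₁ y - f₂ y|) x) ^ 2)
          ^ ((1 : ℝ) / 2) := by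
        refine rpow_le_rpow (integral_nonneg fun x => sq_nonneg _) ?_ (by norm_num)
        refine integral_mono_of_nonneg (.of_forall fun x => sq_nonneg _) h_int
          (.of_forall fun x => ?_)
        exact sq_le_sq.mpr ((abs_singlePixel_sub_le hR hf₁ hf₂ hf hg hfg hM₁ hM₂ x).trans
          (le_abs_self _))
    _ = exp (2 * R * M) *
        (∫ x in Ω₁, (normalOp (fun y => |f₁ y - f₂ y|) x) ^ 2) ^ ((1 : ℝ) / 2) := by
        simp_rw [mul_pow]
        rw [integral_const_mul, mul_rpow (sq_nonneg _) (integral_nonneg fun x => sq_nonneg _),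
          ← sqrt_eq_rpow, sqrt_sq (exp_pos _).le]
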